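/- lim_{N→∞} Σ_{n=−N+1}^{N−1} Σ_{m∈ℤ} (−1)^{m+n} / (m² + 5(3n+1)²) = (π/(9√5)) · log( 8(4 − √15) ). -/

import Mathlib

open Filter

/-!
Partial fractions give `∑_m (-1)^m / (m² + a²) = π / (a sinh πa)`. Expanding `1 / sinh` as a
geometric series and exchanging the summations turns the double sum over `m² + c²(3n+1)²` into
`(2π/c) (log f(q) - log f(q³) / 3)`, where `f(q) = ∏ (1 + q^{2k+1})` and `q = e^{-πc}`; the numbers
`|3n + 1|` are exactly the positive integers prime to `3`, which is why only `q` and `q³` occur.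

For `c = √5` put `τ = i√5`. By Jacobi's triple product `f(q)⁶ θ₂θ₄ = 2 q^{1/4} θ₃²`, so
`H = f(q)¹⁸ / f(q³)⁶` is algebraic in the ratios of theta constants at `τ` and `3τ`. Those satisfy
Jacobi's identity `θ₃⁴ = θ₂⁴ + θ₄⁴`, the degree three relation
`θ₃(τ)θ₃(3τ) = θ₂(τ)θ₂(3τ) + θ₄(τ)θ₄(3τ)`, and `θ₄⁴ - θ₂⁴ = 2√2 θ₂θ₄θ₃²` at `τ`; the last one comes
from complex multiplication, since `σ = (τ - 1)/2` satisfies `3 · (-1/σ) = 2σ + 2`. Eliminating the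
theta constants leaves `H² - 64H + 64 = 0`, and `H < 32` selects the root `8(4 - √15)`.
-/

/-! ### Gaussian binomial coefficients -/

section QBinomial

variable {R : Type*} [CommRing R]

/-- The Gaussian binomial coefficient `[M choose k]_p`, defined by its Pascal rule so that it makes
sense in every commutative ring. -/
def qChoose (p : R) : ℕ → ℕ → R
  | _, 0 => 1
  | 0, _ + 1 => 0
  | M + 1, k + 1 => p ^ (k + 1) * qChoose p M (k + 1) + qChoose p M k

/-- The finite `q`-Pochhammer symbol `(p; p)_n = (1 - p)(1 - p²)⋯(1 - pⁿ)`. -/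
def qPochhammer (p : R) (n : ℕ) : R := ∏ i ∈ Finset.range n, (1 - p ^ (i + 1))

@[simp]
lemma qChoose_zero_right (p : R) (M : ℕ) : qChoose p M 0 = 1 := by cases M <;> rfl

lemma qChoose_succ_succ (p : R) (M k : ℕ) :
    qChoose p (M + 1) (k + 1) = p ^ (k + 1) * qChoose p M (k + 1) + qChoose p M k := rfl

lemma qChoose_eq_zero_of_lt (p : R) {M k : ℕ} (h : M < k) : qChoose p M k = 0 := by
  induction M generalizing k with
  | zero => obtain ⟨j, rfl⟩ := Nat.exists_eq_succ_of_ne_zero h.ne'; rfl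
  | succ M ih =>
    obtain ⟨j, rfl⟩ := Nat.exists_eq_succ_of_ne_zero (Nat.ne_zero_of_lt h)
    rw [qChoose_succ_succ, ih (by omega), ih (by omega), mul_zero, add_zero]

@[simp]
lemma qPochhammer_zero (p : R) : qPochhammer p 0 = 1 := Finset.prod_range_zero _

lemma qPochhammer_succ (p : R) (n : ℕ) :
    qPochhammer p (n + 1) = qPochhammer p n * (1 - p ^ (n + 1)) :=
  Finset.prod_range_succ _ n

lemma qChoose_add_mul_qPochhammer (p : R) (k m : ℕ) :
    qChoose p (k + m) k * (qPochhammer p k * qPochhammer p m) = qPochhammer p (k + m) := by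
  induction k generalizing m with
  | zero => simp
  | succ k ihk =>
    induction m with
    | zero =>
      have h := ihk 0
      simp only [add_zero, qPochhammer_zero, mul_one] at h ⊢
      rw [qChoose_succ_succ, qChoose_eq_zero_of_lt p k.lt_succ_self, qPochhammer_succ]
      linear_combination (1 - p ^ (k + 1)) * h
    | succ m ihm =>
      have h := ihk (m + 1)
      rw [← Nat.add_assoc] at h
      rw [show k + 1 + m = k + m + 1 by ring] at ihm
      rw [show k + 1 + (m + 1) = k + m + 1 + 1 by ring, qChoose_succ_succ,
        qPochhammer_succ p (k + m + 1), show k + m + 1 + 1 = k + 1 + (m + 1) by ring, pow_add]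
      simp only [qPochhammer_succ] at h ihm ⊢
      linear_combination p ^ (k + 1) * (1 - p ^ (m + 1)) * ihm + (1 - p ^ (k + 1)) * h

theorem prod_one_add_mul_pow_eq_sum_qChoose (p x : R) (M : ℕ) :
    ∏ k ∈ Finset.range M, (1 + x * p ^ k) =
      ∑ k ∈ Finset.range (M + 1), p ^ k.choose 2 * qChoose p M k * x ^ k := by
  induction M generalizing x with
  | zero => simp
  | succ M ih =>
    have pascal (k : ℕ) : p ^ (k + 1).choose 2 * qChoose p (M + 1) (k + 1) * x ^ (k + 1) =
        p ^ (k + 1).choose 2 * qChoose p M (k + 1) * (x * p) ^ (k + 1) +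
          x * (p ^ k.choose 2 * qChoose p M k * (x * p) ^ k) := by
      rw [qChoose_succ_succ, Nat.choose_succ_succ' k 1, Nat.choose_one_right, pow_add p k]
      ring
    have shift : ∏ k ∈ Finset.range M, (1 + x * p ^ (k + 1)) =
        ∏ k ∈ Finset.range M, (1 + x * p * p ^ k) :=
      Finset.prod_congr rfl fun k _ => by ring
    have top :=
      Finset.sum_range_succ' (fun k => p ^ k.choose 2 * qChoose p M k * (x * p) ^ k) (M + 1)
    rw [Finset.sum_range_succ, qChoose_eq_zero_of_lt p M.lt_succ_self] at top
    rw [Finset.prod_range_succ', shift, ih, Finset.sum_range_succ' _ (M + 1),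
      Finset.sum_congr rfl fun k _ => pascal k, Finset.sum_add_distrib, ← Finset.mul_sum]
    simp only [Nat.choose_zero_succ, pow_zero, qChoose_zero_right, mul_one, mul_zero, zero_mul,
      add_zero] at top ⊢
    linear_combination top

/-- The coefficient `[2N choose N + j]_p`, recentred at `j = 0`. The guard is needed because
`Int.toNat` sends all `j < -N` to the bottom index. -/
def centralQChoose (p : R) (N : ℕ) (j : ℤ) : R :=
  if j.natAbs ≤ N then qChoose p (2 * N) (N + j).toNat else 0

lemma centralQChoose_eq_zero (p : R) {N : ℕ} {j : ℤ} (hj : N < j.natAbs) :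
    centralQChoose p N j = 0 :=
  if_neg hj.not_ge

lemma centralQChoose_natCast_sub (p : R) {N k : ℕ} (hk : k ≤ 2 * N) :
    centralQChoose p N (k - N) = qChoose p (2 * N) k := by
  rw [centralQChoose, if_pos (by omega), add_sub_cancel, Int.toNat_natCast]

end QBinomial

section FiniteTripleProduct

variable {K : Type*} [Field K] {q w : K}

lemma prod_range_mul_inv_pow_odd (q w : K) (N : ℕ) :
    ∏ i ∈ Finset.range N, w * (q ^ (2 * i + 1))⁻¹ = w ^ N * (q ^ N ^ 2)⁻¹ := by
  induction N with
  | zero => simp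
  | succ n ih =>
    rw [Finset.prod_range_succ, ih, show (n + 1) ^ 2 = n ^ 2 + (2 * n + 1) by ring, pow_add q,
      mul_inv]
    ring

lemma prod_range_two_mul_one_add (hq : q ≠ 0) (hw : w ≠ 0) (N : ℕ) :
    ∏ k ∈ Finset.range (2 * N), (1 + w * q ^ (1 - 2 * (N : ℤ)) * (q ^ 2) ^ k) =
      w ^ N * (q ^ N ^ 2)⁻¹ *
        ∏ k ∈ Finset.range N, ((1 + w * q ^ (2 * k + 1)) * (1 + w⁻¹ * q ^ (2 * k + 1))) := by
  have lower : ∀ i ∈ Finset.range N, 1 + w * q ^ (1 - 2 * (N : ℤ)) * (q ^ 2) ^ (N - 1 - i) =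
      w * (q ^ (2 * i + 1))⁻¹ * (1 + w⁻¹ * q ^ (2 * i + 1)) := by
    intro i hi
    rw [Finset.mem_range] at hi
    have exponent : q ^ (1 - 2 * (N : ℤ)) * (q ^ 2) ^ (N - 1 - i) = (q ^ (2 * i + 1))⁻¹ := by
      rw [← pow_mul, ← zpow_natCast, ← zpow_natCast, ← zpow_neg, ← zpow_add₀ hq]
      congr 1
      omega
    rw [mul_assoc, exponent]
    field_simp
    ring
  have upper : ∀ i ∈ Finset.range N, 1 + w * q ^ (1 - 2 * (N : ℤ)) * (q ^ 2) ^ (N + i) =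
      1 + w * q ^ (2 * i + 1) := by
    intro i _
    have exponent : q ^ (1 - 2 * (N : ℤ)) * (q ^ 2) ^ (N + i) = q ^ (2 * i + 1) := by
      rw [← pow_mul, ← zpow_natCast, ← zpow_natCast, ← zpow_add₀ hq]
      congr 1
      push_cast
      ring
    rw [mul_assoc, exponent]
  rw [two_mul N, Finset.prod_range_add, ← Finset.prod_range_reflect,
    Finset.prod_congr rfl lower, Finset.prod_congr rfl upper, Finset.prod_mul_distrib,
    prod_range_mul_inv_pow_odd, Finset.prod_mul_distrib]
  ring

lemma two_mul_choose_two (k : ℕ) : 2 * (k.choose 2 : ℤ) = k * (k - 1) := by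
  induction k with
  | zero => simp
  | succ k ih =>
    rw [Nat.choose_succ_succ' k 1, Nat.choose_one_right]
    push_cast
    linear_combination ih

lemma prod_eq_sum_qChoose_mul_zpow (hq : q ≠ 0) (hw : w ≠ 0) (N : ℕ) :
    ∏ k ∈ Finset.range N, ((1 + w * q ^ (2 * k + 1)) * (1 + w⁻¹ * q ^ (2 * k + 1))) =
      ∑ k ∈ Finset.range (2 * N + 1), qChoose (q ^ 2) (2 * N) k *
        (q ^ ((k : ℤ) - N) ^ 2 * w ^ ((k : ℤ) - N)) := by
  have hne : w ^ N * (q ^ N ^ 2)⁻¹ ≠ 0 := by simp [hq, hw]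
  apply mul_left_cancel₀ hne
  rw [← prod_range_two_mul_one_add hq hw, prod_one_add_mul_pow_eq_sum_qChoose, Finset.mul_sum]
  refine Finset.sum_congr rfl fun k _ => ?_
  have w_exponent : w ^ N * w ^ ((k : ℤ) - N) = w ^ k := by
    rw [← zpow_natCast, ← zpow_natCast, ← zpow_add₀ hw, add_sub_cancel]
  have q_exponent : (q ^ N ^ 2)⁻¹ * q ^ ((k : ℤ) - N) ^ 2 =
      (q ^ 2) ^ k.choose 2 * (q ^ (1 - 2 * (N : ℤ))) ^ k := by
    rw [← pow_mul, ← zpow_natCast, ← zpow_natCast, ← zpow_natCast, ← zpow_neg, ← zpow_mul,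
      ← zpow_add₀ hq, ← zpow_add₀ hq]
    congr 1
    push_cast
    rw [two_mul_choose_two]
    ring
  rw [mul_pow w, ← w_exponent]
  linear_combination (-qChoose (q ^ 2) (2 * N) k * w ^ N * w ^ ((k : ℤ) - N)) * q_exponent

theorem prod_eq_sum_centralQChoose (hq : q ≠ 0) (hw : w ≠ 0) (N : ℕ) :
    ∏ k ∈ Finset.range N, ((1 + w * q ^ (2 * k + 1)) * (1 + w⁻¹ * q ^ (2 * k + 1))) =
      ∑ j ∈ Finset.Icc (-(N : ℤ)) N, centralQChoose (q ^ 2) N j * (q ^ j ^ 2 * w ^ j) := by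
  rw [prod_eq_sum_qChoose_mul_zpow hq hw]
  refine Finset.sum_bij (fun k _ => (k : ℤ) - N) ?_ ?_ ?_ ?_
  · intro k hk
    rw [Finset.mem_range] at hk
    rw [Finset.mem_Icc]
    omega
  · intro a _ b _ h
    simpa using h
  · intro j hj
    rw [Finset.mem_Icc] at hj
    exact ⟨(N + j).toNat, by rw [Finset.mem_range]; omega, by omega⟩
  · intro k hk
    rw [Finset.mem_range] at hk
    rw [centralQChoose_natCast_sub _ (by omega)]

end FiniteTripleProduct

/-! ### The Jacobi triple product -/

section EulerProduct

/-- The infinite `q`-Pochhammer symbol `(p; p)_∞ = ∏_{n ≥ 1} (1 - pⁿ)`. -/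
noncomputable def qPochhammerInf (p : ℂ) : ℂ := ∏' i : ℕ, (1 - p ^ (i + 1))

variable {p : ℂ}

lemma summable_norm_pow_succ (hp : ‖p‖ < 1) : Summable fun i : ℕ => ‖-p ^ (i + 1)‖ := by
  simpa only [norm_neg, norm_pow] using
    (summable_nat_add_iff 1).2 (summable_geometric_of_lt_one (norm_nonneg p) hp)

lemma one_sub_pow_succ_ne_zero (hp : ‖p‖ < 1) (i : ℕ) : 1 - p ^ (i + 1) ≠ 0 := fun h => by
  have := pow_lt_one₀ (norm_nonneg p) hp i.succ_ne_zero
  rw [← norm_pow, ← sub_eq_zero.1 h, norm_one] at this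
  exact lt_irrefl _ this

lemma qPochhammer_ne_zero (hp : ‖p‖ < 1) (n : ℕ) : qPochhammer p n ≠ 0 :=
  Finset.prod_ne_zero_iff.2 fun i _ => one_sub_pow_succ_ne_zero hp i

lemma qPochhammerInf_ne_zero (hp : ‖p‖ < 1) : qPochhammerInf p ≠ 0 := by
  simp only [qPochhammerInf, sub_eq_add_neg]
  refine tprod_one_add_ne_zero_of_summable (fun i => ?_) (summable_norm_pow_succ hp)
  rw [← sub_eq_add_neg]
  exact one_sub_pow_succ_ne_zero hp i

lemma tendsto_qPochhammer (hp : ‖p‖ < 1) :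
    Tendsto (qPochhammer p) atTop (nhds (qPochhammerInf p)) := by
  simp only [qPochhammerInf, sub_eq_add_neg]
  refine (multipliable_one_add_of_summable
    (summable_norm_pow_succ hp)).hasProd.tendsto_prod_nat.congr fun n => ?_
  simp only [qPochhammer, sub_eq_add_neg]

lemma centralQChoose_eq_div (hp : ‖p‖ < 1) {N : ℕ} {j : ℤ} (hj : j.natAbs ≤ N) :
    centralQChoose p N j =
      qPochhammer p (2 * N) * ((qPochhammer p (N + j).toNat)⁻¹ *
        (qPochhammer p (N - j).toNat)⁻¹) := by
  have h := qChoose_add_mul_qPochhammer p (N + j).toNat (N - j).toNat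
  rw [show (N + j).toNat + (N - j).toNat = 2 * N by omega] at h
  rw [centralQChoose, if_pos hj, ← h, ← mul_inv, mul_inv_cancel_right₀]
  exact mul_ne_zero (qPochhammer_ne_zero hp _) (qPochhammer_ne_zero hp _)

lemma tendsto_centralQChoose (hp : ‖p‖ < 1) (j : ℤ) :
    Tendsto (fun N => centralQChoose p N j) atTop (nhds (qPochhammerInf p)⁻¹) := by
  have hL := qPochhammerInf_ne_zero hp
  have hlim := tendsto_qPochhammer hp
  have toNat_atTop (i : ℤ) : Tendsto (fun N : ℕ => ((N : ℤ) + i).toNat) atTop atTop := by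
    refine tendsto_atTop.2 fun b => ?_
    filter_upwards [eventually_ge_atTop (b + i.natAbs)] with N hN
    omega
  have hquot := (hlim.comp (tendsto_id.const_mul_atTop' two_pos)).mul
    (((hlim.comp (toNat_atTop j)).inv₀ hL).mul ((hlim.comp (toNat_atTop (-j))).inv₀ hL))
  rw [mul_inv_cancel_left₀ hL] at hquot
  refine hquot.congr' ?_
  filter_upwards [eventually_ge_atTop j.natAbs] with N hN
  exact (centralQChoose_eq_div hp hN).symm

lemma exists_norm_centralQChoose_le (hp : ‖p‖ < 1) :
    ∃ C : ℝ, ∀ (N : ℕ) (j : ℤ), ‖centralQChoose p N j‖ ≤ C := by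
  have hlim := tendsto_qPochhammer hp
  obtain ⟨C, hC⟩ := hlim.norm.bddAbove_range
  obtain ⟨D, hD⟩ := (hlim.inv₀ (qPochhammerInf_ne_zero hp)).norm.bddAbove_range
  replace hC n : ‖qPochhammer p n‖ ≤ C := hC ⟨n, rfl⟩
  replace hD n : ‖(qPochhammer p n)⁻¹‖ ≤ D := hD ⟨n, rfl⟩
  have hC0 : 0 ≤ C := (norm_nonneg _).trans (hC 0)
  have hD0 : 0 ≤ D := (norm_nonneg _).trans (hD 0)
  refine ⟨C * (D * D), fun N j => ?_⟩
  rcases le_or_gt j.natAbs N with hj | hj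
  · rw [centralQChoose_eq_div hp hj, norm_mul, norm_mul]
    gcongr
    exacts [hC _, hD _, hD _]
  · rw [centralQChoose_eq_zero p hj, norm_zero]
    positivity

end EulerProduct

section ThetaEvaluation

open Complex
open scoped Real

/-- The nome `q = e^{πiτ}`. -/
noncomputable def nome (τ : ℂ) : ℂ := cexp (π * I * τ)

lemma nome_ne_zero (τ : ℂ) : nome τ ≠ 0 := Complex.exp_ne_zero _

lemma norm_nome_lt_one {τ : ℂ} (hτ : 0 < τ.im) : ‖nome τ‖ < 1 := by
  rw [nome, Complex.norm_exp, Real.exp_lt_one_iff]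
  simp [Real.pi_pos, hτ]

lemma norm_sq_lt_one {q : ℂ} (hq : ‖q‖ < 1) : ‖q ^ 2‖ < 1 := by
  simpa using pow_lt_one₀ (norm_nonneg q) hq two_ne_zero

lemma jacobiTheta₂_term_eq_zpow (j : ℤ) (z τ : ℂ) :
    jacobiTheta₂_term j z τ = nome τ ^ j ^ 2 * cexp (2 * π * I * z) ^ j := by
  rw [nome, ← Complex.exp_int_mul, ← Complex.exp_int_mul, ← Complex.exp_add, jacobiTheta₂_term]
  congr 1
  push_cast
  ring

theorem tendsto_prod_jacobiTheta₂ (z : ℂ) {τ : ℂ} (hτ : 0 < τ.im) :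
    Tendsto (fun N => ∏ k ∈ Finset.range N,
        ((1 + cexp (2 * π * I * z) * nome τ ^ (2 * k + 1)) *
          (1 + (cexp (2 * π * I * z))⁻¹ * nome τ ^ (2 * k + 1))))
      atTop (nhds ((qPochhammerInf (nome τ ^ 2))⁻¹ * jacobiTheta₂ z τ)) := by
  have hp : ‖nome τ ^ 2‖ < 1 := norm_sq_lt_one (norm_nome_lt_one hτ)
  have finite (N : ℕ) : ∏ k ∈ Finset.range N,
      ((1 + cexp (2 * π * I * z) * nome τ ^ (2 * k + 1)) *
        (1 + (cexp (2 * π * I * z))⁻¹ * nome τ ^ (2 * k + 1))) =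
      ∑' j : ℤ, centralQChoose (nome τ ^ 2) N j * jacobiTheta₂_term j z τ := by
    simp only [jacobiTheta₂_term_eq_zpow]
    rw [prod_eq_sum_centralQChoose (nome_ne_zero τ) (Complex.exp_ne_zero _), tsum_eq_sum]
    intro j hj
    rw [Finset.mem_Icc] at hj
    rw [centralQChoose_eq_zero _ (by omega), zero_mul]
  obtain ⟨C, hC⟩ := exists_norm_centralQChoose_le hp
  simp only [finite, jacobiTheta₂, ← tsum_mul_left]
  refine tendsto_tsum_of_dominated_convergence
    (((summable_jacobiTheta₂_term_iff z τ).2 hτ).norm.mul_left C)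
    (fun j => (tendsto_centralQChoose hp j).mul_const _)
    (Eventually.of_forall fun N j => ?_)
  rw [norm_mul]
  gcongr
  exact hC N j

section OddProduct

/-- The infinite product `∏_{k ≥ 0} (1 + q^{2k+1})`, which is Weber's modular function `𝔣` up to
the factor `q^{-1/24}`. -/
noncomputable def oddProd {K : Type*} [NormedField K] (q : K) : K :=
  ∏' k : ℕ, (1 + q ^ (2 * k + 1))

section NormedField

variable {K : Type*} [NormedField K] {q : K}

lemma summable_norm_odd_pow (hq : ‖q‖ < 1) : Summable fun k : ℕ => ‖q ^ (2 * k + 1)‖ := by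
  simp only [norm_pow]
  exact (summable_geometric_of_lt_one (norm_nonneg q) hq).comp_injective
    fun a b h => by omega

lemma multipliable_one_add_odd_pow [CompleteSpace K] (hq : ‖q‖ < 1) :
    Multipliable fun k : ℕ => 1 + q ^ (2 * k + 1) :=
  multipliable_one_add_of_summable (summable_norm_odd_pow hq)

lemma tendsto_prod_one_add_odd_pow [CompleteSpace K] (hq : ‖q‖ < 1) :
    Tendsto (fun N => ∏ k ∈ Finset.range N, (1 + q ^ (2 * k + 1))) atTop (nhds (oddProd q)) :=
  (multipliable_one_add_odd_pow hq).hasProd.tendsto_prod_nat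

end NormedField

lemma ofReal_oddProd {q : ℝ} (hq : ‖q‖ < 1) : ((oddProd q : ℝ) : ℂ) = oddProd (q : ℂ) := by
  have h := (multipliable_one_add_odd_pow hq).map_tprod ofRealHom continuous_ofReal
  simpa [oddProd] using h

lemma prod_one_add_mul_qPochhammer {R : Type*} [CommRing R] (q : R) (N : ℕ) :
    (∏ k ∈ Finset.range N, (1 + q ^ (2 * k + 1))) *
      (∏ k ∈ Finset.range N, (1 + (-q) ^ (2 * k + 1))) *
      (∏ k ∈ Finset.range N, (1 + (q ^ 2) ^ (k + 1))) * qPochhammer (q ^ 2) N =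
        qPochhammer (q ^ 2) (2 * N) := by
  induction N with
  | zero => simp
  | succ N ih =>
    rw [show 2 * (N + 1) = 2 * N + 1 + 1 by ring, qPochhammer_succ _ (2 * N + 1),
      qPochhammer_succ _ (2 * N), ← ih]
    simp only [Finset.prod_range_succ, qPochhammer_succ, Odd.neg_pow ⟨N, rfl⟩]
    ring

variable {q : ℂ}

lemma tendsto_prod_one_add_sq_pow (hq : ‖q‖ < 1) :
    Tendsto (fun N => ∏ k ∈ Finset.range N, (1 + (q ^ 2) ^ (k + 1))) atTop
      (nhds (∏' k : ℕ, (1 + (q ^ 2) ^ (k + 1)))) := by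
  refine (multipliable_one_add_of_summable ?_).hasProd.tendsto_prod_nat
  simpa only [norm_neg] using summable_norm_pow_succ (norm_sq_lt_one hq)

theorem oddProd_mul_oddProd_neg_mul_tprod (hq : ‖q‖ < 1) :
    oddProd q * oddProd (-q) * ∏' k : ℕ, (1 + (q ^ 2) ^ (k + 1)) = 1 := by
  have hp := norm_sq_lt_one hq
  have hlim := tendsto_qPochhammer hp
  have hlhs := ((((tendsto_prod_one_add_odd_pow hq).mul
    (tendsto_prod_one_add_odd_pow ((norm_neg q).trans_lt hq))).mul
    (tendsto_prod_one_add_sq_pow hq)).mul hlim).congr (prod_one_add_mul_qPochhammer q)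
  have hrhs := hlim.comp (tendsto_id.const_mul_atTop' two_pos)
  exact mul_right_cancel₀ (qPochhammerInf_ne_zero hp)
    ((tendsto_nhds_unique hlhs hrhs).trans (one_mul _).symm)

end OddProduct

section ThetaProducts

/-- Jacobi's theta function with half-integral characteristic,
`∑_{n ∈ ℤ} e^{2πi(n+1/2)z + πi(n+1/2)²τ}`, expressed through the integral one. -/
noncomputable def halfTheta (z τ : ℂ) : ℂ :=
  cexp (π * I * z + π * I * τ / 4) * jacobiTheta₂ (z + τ / 2) τ

/-- The theta constant `θ₂(τ) = ∑_{n ∈ ℤ} q^{(n+1/2)²}`. -/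
noncomputable def thetaTwo (τ : ℂ) : ℂ := halfTheta 0 τ

/-- The theta constant `θ₃(τ) = ∑_{n ∈ ℤ} q^{n²}`. -/
noncomputable def thetaThree (τ : ℂ) : ℂ := jacobiTheta₂ 0 τ

/-- The theta constant `θ₄(τ) = ∑_{n ∈ ℤ} (-1)ⁿ q^{n²}`. -/
noncomputable def thetaFour (τ : ℂ) : ℂ := jacobiTheta₂ (1 / 2) τ

variable {τ : ℂ}

lemma thetaTwo_eq (τ : ℂ) : thetaTwo τ = cexp (π * I * τ / 4) * jacobiTheta₂ (τ / 2) τ := by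
  rw [thetaTwo, halfTheta, mul_zero, zero_add, zero_add]

lemma eq_qPochhammerInf_mul_of_tendsto {z L : ℂ} (hτ : 0 < τ.im)
    (h : Tendsto (fun N => ∏ k ∈ Finset.range N,
        ((1 + cexp (2 * π * I * z) * nome τ ^ (2 * k + 1)) *
          (1 + (cexp (2 * π * I * z))⁻¹ * nome τ ^ (2 * k + 1)))) atTop (nhds L)) :
    jacobiTheta₂ z τ = qPochhammerInf (nome τ ^ 2) * L := by
  rw [tendsto_nhds_unique h (tendsto_prod_jacobiTheta₂ z hτ), mul_inv_cancel_left₀]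
  exact qPochhammerInf_ne_zero (norm_sq_lt_one (norm_nome_lt_one hτ))

lemma thetaThree_eq_oddProd (hτ : 0 < τ.im) :
    thetaThree τ = qPochhammerInf (nome τ ^ 2) * oddProd (nome τ) ^ 2 := by
  have h := (tendsto_prod_one_add_odd_pow (norm_nome_lt_one hτ)).pow 2
  refine eq_qPochhammerInf_mul_of_tendsto hτ (h.congr fun N => ?_)
  simp [Finset.prod_mul_distrib, sq]

lemma thetaFour_eq_oddProd (hτ : 0 < τ.im) :
    thetaFour τ = qPochhammerInf (nome τ ^ 2) * oddProd (-nome τ) ^ 2 := by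
  have h := (tendsto_prod_one_add_odd_pow ((norm_neg _).trans_lt (norm_nome_lt_one hτ))).pow 2
  refine eq_qPochhammerInf_mul_of_tendsto hτ (h.congr fun N => ?_)
  have hexp : cexp (2 * π * I * (1 / 2)) = -1 := by
    rw [← exp_pi_mul_I]
    congr 1
    ring
  have sign (k : ℕ) : (-nome τ) ^ (2 * k + 1) = -nome τ ^ (2 * k + 1) := Odd.neg_pow ⟨k, rfl⟩ _
  simp only [hexp, sign, inv_neg_one, neg_one_mul, Finset.prod_mul_distrib, sq]

lemma prod_mul_telescope {R : Type*} [CommRing R] (p : R) (N : ℕ) :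
    (∏ k ∈ Finset.range N, ((1 + p ^ (k + 1)) * (1 + p ^ k))) * (1 + p ^ N) =
      2 * (∏ k ∈ Finset.range N, (1 + p ^ (k + 1))) ^ 2 := by
  induction N with
  | zero => norm_num
  | succ N ih =>
    rw [Finset.prod_range_succ, Finset.prod_range_succ]
    linear_combination (1 + p ^ (N + 1)) ^ 2 * ih

lemma jacobiTheta₂_half_period_eq_tprod (hτ : 0 < τ.im) :
    jacobiTheta₂ (τ / 2) τ =
      2 * qPochhammerInf (nome τ ^ 2) * (∏' k : ℕ, (1 + (nome τ ^ 2) ^ (k + 1))) ^ 2 := by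
  have hq := norm_nome_lt_one hτ
  have hexp : cexp (2 * π * I * (τ / 2)) = nome τ := by
    rw [nome]
    congr 1
    ring
  have factor (k : ℕ) : (1 + nome τ * nome τ ^ (2 * k + 1)) *
      (1 + (nome τ)⁻¹ * nome τ ^ (2 * k + 1)) =
        (1 + (nome τ ^ 2) ^ (k + 1)) * (1 + (nome τ ^ 2) ^ k) := by
    rw [pow_succ' _ (2 * k), inv_mul_cancel_left₀ (nome_ne_zero τ)]
    ring
  have hlast : Tendsto (fun N => 1 + (nome τ ^ 2) ^ N) atTop (nhds (1 + 0)) :=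
    (tendsto_pow_atTop_nhds_zero_of_norm_lt_one (norm_sq_lt_one hq)).const_add 1
  have hprod := tendsto_prod_jacobiTheta₂ (τ / 2) hτ
  simp only [hexp, factor] at hprod
  have h := tendsto_nhds_unique
    ((hprod.mul hlast).congr (prod_mul_telescope (nome τ ^ 2)))
    (((tendsto_prod_one_add_sq_pow hq).pow 2).const_mul 2)
  have hP := qPochhammerInf_ne_zero (norm_sq_lt_one hq)
  field_simp at h
  linear_combination h

lemma thetaTwo_ne_zero (hτ : 0 < τ.im) : thetaTwo τ ≠ 0 := by
  have hq := norm_nome_lt_one hτ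
  have hprod := right_ne_zero_of_mul_eq_one (oddProd_mul_oddProd_neg_mul_tprod hq)
  rw [thetaTwo_eq, jacobiTheta₂_half_period_eq_tprod hτ]
  exact mul_ne_zero (Complex.exp_ne_zero _) (mul_ne_zero (mul_ne_zero two_ne_zero
    (qPochhammerInf_ne_zero (norm_sq_lt_one hq))) (pow_ne_zero 2 hprod))

lemma thetaThree_ne_zero (hτ : 0 < τ.im) : thetaThree τ ≠ 0 := by
  have hq := norm_nome_lt_one hτ
  have hprod := left_ne_zero_of_mul
    (left_ne_zero_of_mul_eq_one (oddProd_mul_oddProd_neg_mul_tprod hq))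
  rw [thetaThree_eq_oddProd hτ]
  exact mul_ne_zero (qPochhammerInf_ne_zero (norm_sq_lt_one hq)) (pow_ne_zero 2 hprod)

lemma thetaFour_ne_zero (hτ : 0 < τ.im) : thetaFour τ ≠ 0 := by
  have hq := norm_nome_lt_one hτ
  have hprod := right_ne_zero_of_mul
    (left_ne_zero_of_mul_eq_one (oddProd_mul_oddProd_neg_mul_tprod hq))
  rw [thetaFour_eq_oddProd hτ]
  exact mul_ne_zero (qPochhammerInf_ne_zero (norm_sq_lt_one hq)) (pow_ne_zero 2 hprod)

theorem oddProd_pow_six_mul_thetaTwo_mul_thetaFour (hτ : 0 < τ.im) :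
    oddProd (nome τ) ^ 6 * (thetaTwo τ * thetaFour τ) =
      2 * cexp (π * I * τ / 4) * thetaThree τ ^ 2 := by
  have h := oddProd_mul_oddProd_neg_mul_tprod (norm_nome_lt_one hτ)
  rw [thetaTwo_eq, jacobiTheta₂_half_period_eq_tprod hτ, thetaFour_eq_oddProd hτ,
    thetaThree_eq_oddProd hτ]
  linear_combination 2 * cexp (π * I * τ / 4) * qPochhammerInf (nome τ ^ 2) ^ 2 *
    oddProd (nome τ) ^ 4 * congrArg (· ^ 2) h

end ThetaProducts

/-! ### Addition formulas for theta functions -/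

section ParitySplit

/-- The decomposition of `ℤ × ℤ` into the pairs with even sum, `(i + j, i - j)`, and those with odd
sum, `(i + j + 1, i - j)`. -/
def paritySplit : (ℤ × ℤ) ⊕ (ℤ × ℤ) ≃ ℤ × ℤ where
  toFun := Sum.elim (fun p => (p.1 + p.2, p.1 - p.2)) (fun p => (p.1 + p.2 + 1, p.1 - p.2))
  invFun p := if (p.1 + p.2) % 2 = 0 then Sum.inl ((p.1 + p.2) / 2, (p.1 - p.2) / 2)
    else Sum.inr ((p.1 + p.2) / 2, (p.1 - p.2) / 2)
  left_inv := by
    rintro (⟨i, j⟩ | ⟨i, j⟩)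
    · refine (if_pos ?_).trans (congrArg Sum.inl (Prod.ext ?_ ?_)) <;> dsimp <;> omega
    · refine (if_neg ?_).trans (congrArg Sum.inr (Prod.ext ?_ ?_)) <;> dsimp <;> omega
  right_inv := by
    rintro ⟨a, b⟩
    dsimp only
    split_ifs with h
    · simp only [Sum.elim_inl, Prod.mk.injEq]
      omega
    · simp only [Sum.elim_inr, Prod.mk.injEq]
      omega

lemma tsum_mul_tsum_eq_paritySplit {f g : ℤ → ℂ} (hf : Summable f) (hg : Summable g) :
    (∑' n, f n) * (∑' n, g n) = ∑' p : ℤ × ℤ, f (p.1 + p.2) * g (p.1 - p.2) +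
      ∑' p : ℤ × ℤ, f (p.1 + p.2 + 1) * g (p.1 - p.2) := by
  have hfg := summable_mul_of_summable_norm hf.norm hg.norm
  have hsplit := (paritySplit.summable_iff (f := fun p : ℤ × ℤ => f p.1 * g p.2)).2 hfg
  rw [tsum_mul_tsum_of_summable_norm hf.norm hg.norm, ← paritySplit.tsum_eq]
  exact (hsplit.comp_injective Sum.inl_injective).tsum_sum
    (hsplit.comp_injective Sum.inr_injective)

end ParitySplit

section Duplication

/-- The general term `e^{2πixz + πix²τ}` of a theta series, at an arbitrary index `x`. -/
noncomputable def thetaTerm (x z τ : ℂ) : ℂ := cexp (2 * π * I * x * z + π * I * x ^ 2 * τ)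

lemma thetaTerm_mul_thetaTerm (x y z w τ : ℂ) :
    thetaTerm (x + y) z τ * thetaTerm (x - y) w τ =
      thetaTerm x (z + w) (2 * τ) * thetaTerm y (z - w) (2 * τ) := by
  simp only [thetaTerm, ← Complex.exp_add]
  congr 1
  ring

variable {τ : ℂ}

lemma hasSum_thetaTerm (z : ℂ) (hτ : 0 < τ.im) :
    HasSum (fun n : ℤ => thetaTerm n z τ) (jacobiTheta₂ z τ) :=
  hasSum_jacobiTheta₂_term z hτ

lemma hasSum_thetaTerm_add_half (z : ℂ) (hτ : 0 < τ.im) :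
    HasSum (fun n : ℤ => thetaTerm (n + 1 / 2) z τ) (halfTheta z τ) := by
  refine ((hasSum_thetaTerm (z + τ / 2) hτ).mul_left
    (cexp (π * I * z + π * I * τ / 4))).congr_fun fun n => ?_
  rw [thetaTerm, thetaTerm, ← Complex.exp_add]
  congr 1
  ring

lemma two_mul_im_pos (hτ : 0 < τ.im) : 0 < (2 * τ).im := by simpa using hτ

theorem jacobiTheta₂_mul_jacobiTheta₂ (z w : ℂ) (hτ : 0 < τ.im) :
    jacobiTheta₂ z τ * jacobiTheta₂ w τ =
      jacobiTheta₂ (z + w) (2 * τ) * jacobiTheta₂ (z - w) (2 * τ) +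
        halfTheta (z + w) (2 * τ) * halfTheta (z - w) (2 * τ) := by
  have h2 := two_mul_im_pos hτ
  have hz := hasSum_thetaTerm z hτ
  have hw := hasSum_thetaTerm w hτ
  have hadd := hasSum_thetaTerm (z + w) h2
  have hsub := hasSum_thetaTerm (z - w) h2
  have hadd' := hasSum_thetaTerm_add_half (z + w) h2
  have hsub' := hasSum_thetaTerm_add_half (z - w) h2
  rw [← hz.tsum_eq, ← hw.tsum_eq, tsum_mul_tsum_eq_paritySplit hz.summable hw.summable,
    ← hadd.tsum_eq, ← hsub.tsum_eq, ← hadd'.tsum_eq, ← hsub'.tsum_eq,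
    tsum_mul_tsum_of_summable_norm hadd.summable.norm hsub.summable.norm,
    tsum_mul_tsum_of_summable_norm hadd'.summable.norm hsub'.summable.norm]
  congr 1 <;> refine tsum_congr fun p => ?_ <;> rw [← thetaTerm_mul_thetaTerm] <;>
    congr 2 <;> push_cast <;> ring

lemma halfTheta_add_one (z τ : ℂ) : halfTheta (z + 1) τ = -halfTheta z τ := by
  have hexp : cexp (π * I * (z + 1) + π * I * τ / 4) = -cexp (π * I * z + π * I * τ / 4) := by
    rw [← neg_one_mul, ← exp_pi_mul_I, ← Complex.exp_add]
    congr 1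
    ring
  rw [halfTheta, halfTheta, add_right_comm, jacobiTheta₂_add_left, hexp, neg_mul]

lemma halfTheta_neg (z τ : ℂ) : halfTheta (-z) τ = halfTheta z τ := by
  have h := jacobiTheta₂_add_left' (-z - τ / 2) τ
  have hneg : jacobiTheta₂ (-z - τ / 2) τ = jacobiTheta₂ (z + τ / 2) τ := by
    rw [← jacobiTheta₂_neg_left]
    congr 1
    ring
  rw [hneg, show -z - τ / 2 + τ = -z + τ / 2 by ring] at h
  rw [halfTheta, halfTheta, h, ← mul_assoc, ← Complex.exp_add]
  congr 2
  ring

lemma halfTheta_half (τ : ℂ) : halfTheta (1 / 2) τ = 0 := by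
  have h := halfTheta_add_one (-(1 / 2)) τ
  rw [halfTheta_neg, show -(1 / 2) + 1 = (1 / 2 : ℂ) by norm_num] at h
  exact self_eq_neg.1 h

theorem thetaThree_sq (hτ : 0 < τ.im) :
    thetaThree τ ^ 2 = thetaThree (2 * τ) ^ 2 + thetaTwo (2 * τ) ^ 2 := by
  simpa [thetaThree, thetaTwo, sq] using jacobiTheta₂_mul_jacobiTheta₂ 0 0 hτ

theorem thetaFour_sq (hτ : 0 < τ.im) :
    thetaFour τ ^ 2 = thetaThree (2 * τ) ^ 2 - thetaTwo (2 * τ) ^ 2 := by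
  have h := jacobiTheta₂_mul_jacobiTheta₂ (1 / 2) (1 / 2) hτ
  rw [sub_self, show (1 / 2 + 1 / 2 : ℂ) = 0 + 1 by norm_num, halfTheta_add_one,
    jacobiTheta₂_add_left] at h
  simp only [thetaThree, thetaTwo, thetaFour]
  linear_combination h

theorem thetaThree_mul_thetaFour (hτ : 0 < τ.im) :
    thetaThree τ * thetaFour τ = thetaFour (2 * τ) ^ 2 := by
  have h := jacobiTheta₂_mul_jacobiTheta₂ (1 / 2) 0 hτ
  rw [add_zero, sub_zero, halfTheta_half] at h
  simp only [thetaThree, thetaFour]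
  linear_combination h

theorem thetaTwo_sq (hτ : 0 < τ.im) :
    thetaTwo τ ^ 2 = 2 * (thetaTwo (2 * τ) * thetaThree (2 * τ)) := by
  have h := jacobiTheta₂_mul_jacobiTheta₂ (τ / 2) (τ / 2) hτ
  have hhalf : halfTheta τ (2 * τ) = cexp (-(π * I * τ / 2)) * thetaThree (2 * τ) := by
    have hperiod := jacobiTheta₂_add_left' 0 (2 * τ)
    rw [zero_add] at hperiod
    rw [halfTheta, show τ + 2 * τ / 2 = 2 * τ by ring, hperiod, ← mul_assoc, ← Complex.exp_add,
      thetaThree]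
    congr 2
    ring
  have hexp : cexp (π * I * τ / 4) ^ 2 * cexp (-(π * I * τ / 2)) = 1 := by
    rw [sq, ← Complex.exp_add, ← Complex.exp_add, ← Complex.exp_zero]
    congr 1
    ring
  have htwo : jacobiTheta₂ τ (2 * τ) = cexp (-(π * I * τ / 2)) * thetaTwo (2 * τ) := by
    rw [thetaTwo_eq, ← mul_assoc, ← Complex.exp_add, mul_div_cancel_left₀ τ two_ne_zero,
      show -(π * I * τ / 2) + π * I * (2 * τ) / 4 = 0 by ring, Complex.exp_zero, one_mul]
  rw [sub_self, add_halves, hhalf, htwo, ← thetaTwo, ← thetaThree] at h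
  rw [thetaTwo_eq τ]
  linear_combination cexp (π * I * τ / 4) ^ 2 * h +
    2 * thetaTwo (2 * τ) * thetaThree (2 * τ) * hexp

theorem thetaThree_pow_four (hτ : 0 < τ.im) :
    thetaThree τ ^ 4 = thetaTwo τ ^ 4 + thetaFour τ ^ 4 := by
  linear_combination (thetaThree τ ^ 2 + (thetaThree (2 * τ) ^ 2 + thetaTwo (2 * τ) ^ 2)) *
      thetaThree_sq hτ -
    (thetaFour τ ^ 2 + (thetaThree (2 * τ) ^ 2 - thetaTwo (2 * τ) ^ 2)) * thetaFour_sq hτ -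
    (thetaTwo τ ^ 2 + 2 * (thetaTwo (2 * τ) * thetaThree (2 * τ))) * thetaTwo_sq hτ

end Duplication

section DegreeThree

/-- The term `q^{x² + 3y²}` of the theta series of the form `x² + 3y²`. -/
noncomputable def cubicTerm (x y τ : ℂ) : ℂ := cexp (π * I * (x ^ 2 + 3 * y ^ 2) * τ)

lemma thetaTerm_mul_thetaTerm_three (x y z τ : ℂ) :
    thetaTerm x z τ * thetaTerm y z (3 * τ) =
      cexp (2 * π * I * (x + y) * z) * cubicTerm x y τ := by
  simp only [thetaTerm, cubicTerm, ← Complex.exp_add]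
  congr 1
  ring

variable {τ : ℂ}

lemma three_mul_im_pos (hτ : 0 < τ.im) : 0 < (3 * τ).im := by simpa using hτ

lemma thetaThree_mul_thetaThree_three (hτ : 0 < τ.im) :
    thetaThree τ * thetaThree (3 * τ) =
      ∑' p : ℤ × ℤ, cubicTerm (p.1 + p.2) (p.1 - p.2) τ +
        ∑' p : ℤ × ℤ, cubicTerm (p.1 + p.2 + 1) (p.1 - p.2) τ := by
  have h := hasSum_thetaTerm 0 hτ
  have h3 := hasSum_thetaTerm 0 (three_mul_im_pos hτ)
  rw [thetaThree, thetaThree, ← h.tsum_eq, ← h3.tsum_eq,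
    tsum_mul_tsum_eq_paritySplit h.summable h3.summable]
  simp only [thetaTerm_mul_thetaTerm_three, mul_zero, Complex.exp_zero, one_mul]
  push_cast
  rfl

lemma thetaFour_mul_thetaFour_three (hτ : 0 < τ.im) :
    thetaFour τ * thetaFour (3 * τ) =
      ∑' p : ℤ × ℤ, cubicTerm (p.1 + p.2) (p.1 - p.2) τ -
        ∑' p : ℤ × ℤ, cubicTerm (p.1 + p.2 + 1) (p.1 - p.2) τ := by
  have h := hasSum_thetaTerm (1 / 2) hτ
  have h3 := hasSum_thetaTerm (1 / 2) (three_mul_im_pos hτ)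
  have even_sign (i j : ℂ) : 2 * π * I * (i + j + (i - j)) * (1 / 2) = i * (2 * π * I) := by ring
  have odd_sign (i j : ℂ) : 2 * π * I * (i + j + 1 + (i - j)) * (1 / 2) =
      i * (2 * π * I) + π * I := by ring
  rw [thetaFour, thetaFour, ← h.tsum_eq, ← h3.tsum_eq,
    tsum_mul_tsum_eq_paritySplit h.summable h3.summable, sub_eq_add_neg, ← tsum_neg]
  simp only [thetaTerm_mul_thetaTerm_three, Int.cast_add, Int.cast_sub, Int.cast_one, even_sign,
    odd_sign, Complex.exp_add, exp_int_mul_two_pi_mul_I, exp_pi_mul_I, one_mul, neg_one_mul]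

lemma thetaTwo_mul_thetaTwo_three (hτ : 0 < τ.im) :
    thetaTwo τ * thetaTwo (3 * τ) =
      2 * ∑' p : ℤ × ℤ, cubicTerm (p.1 + p.2 + 1) (p.1 - p.2) τ := by
  have h := hasSum_thetaTerm_add_half 0 hτ
  have h3 := hasSum_thetaTerm_add_half 0 (three_mul_im_pos hτ)
  rw [thetaTwo, thetaTwo, ← h.tsum_eq, ← h3.tsum_eq,
    tsum_mul_tsum_eq_paritySplit h.summable h3.summable, two_mul]
  simp only [thetaTerm_mul_thetaTerm_three, mul_zero, Complex.exp_zero, one_mul]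
  -- The reindexings are the reflections `(x, y) ↦ ((x ± 3y)/2, ±(x ∓ y)/2)` preserving `x² + 3y²`.
  let reflection : ℤ × ℤ ≃ ℤ × ℤ :=
    { toFun p := (p.1, p.1 - p.2), invFun p := (p.1, p.1 - p.2)
      left_inv p := by simp
      right_inv p := by simp }
  let reflection' : ℤ × ℤ ≃ ℤ × ℤ :=
    { toFun p := (p.2 - p.1 - 1, p.2), invFun p := (p.2 - p.1 - 1, p.2)
      left_inv p := Prod.ext (by dsimp only; omega) rfl
      right_inv p := Prod.ext (by dsimp only; omega) rfl }
  congr 1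
  · rw [← reflection.tsum_eq]
    refine tsum_congr fun p => ?_
    simp only [reflection, Equiv.coe_fn_mk, cubicTerm]
    congr 1
    push_cast
    ring
  · rw [← reflection'.tsum_eq]
    refine tsum_congr fun p => ?_
    simp only [reflection', Equiv.coe_fn_mk, cubicTerm]
    congr 1
    push_cast
    ring

theorem thetaThree_mul_thetaThree_three_eq_add (hτ : 0 < τ.im) :
    thetaThree τ * thetaThree (3 * τ) =
      thetaFour τ * thetaFour (3 * τ) + thetaTwo τ * thetaTwo (3 * τ) := by
  rw [thetaThree_mul_thetaThree_three hτ, thetaFour_mul_thetaFour_three hτ,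
    thetaTwo_mul_thetaTwo_three hτ]
  ring

end DegreeThree

/-! ### Modular transformations and complex multiplication -/

section Modular

lemma jacobiTheta₂_add_one_right (z τ : ℂ) :
    jacobiTheta₂ z (τ + 1) = jacobiTheta₂ (z + 1 / 2) τ := by
  refine tsum_congr fun n => ?_
  obtain ⟨m, hm⟩ := Int.even_mul_succ_self (n - 1)
  have hm' : ((n : ℂ) - 1) * (n - 1 + 1) = m + m := by exact_mod_cast hm
  rw [jacobiTheta₂_term, jacobiTheta₂_term, Complex.exp_eq_exp_iff_exists_int]
  exact ⟨m, by linear_combination (π * I) * hm'⟩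

lemma thetaThree_add_one (τ : ℂ) : thetaThree (τ + 1) = thetaFour τ := by
  rw [thetaThree, thetaFour, jacobiTheta₂_add_one_right, zero_add]

lemma thetaFour_add_one (τ : ℂ) : thetaFour (τ + 1) = thetaThree τ := by
  rw [thetaThree, thetaFour, jacobiTheta₂_add_one_right, add_halves, ← zero_add (1 : ℂ),
    jacobiTheta₂_add_left]

lemma thetaTwo_add_one (τ : ℂ) : thetaTwo (τ + 1) = cexp (π * I / 4) * thetaTwo τ := by
  rw [thetaTwo_eq, thetaTwo_eq, jacobiTheta₂_add_one_right,
    show (τ + 1) / 2 + 1 / 2 = τ / 2 + 1 by ring, jacobiTheta₂_add_left, ← mul_assoc,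
    ← Complex.exp_add]
  congr 2
  ring

lemma exists_thetaConstants_neg_inv {σ : ℂ} (hσ : σ ≠ 0) :
    ∃ c : ℂ, thetaThree σ = c * thetaThree (-1 / σ) ∧ thetaFour σ = c * thetaTwo (-1 / σ) ∧
      thetaTwo σ = c * thetaFour (-1 / σ) := by
  refine ⟨1 / (-I * σ) ^ (1 / 2 : ℂ), ?_, ?_, ?_⟩
  · rw [thetaThree, thetaThree, jacobiTheta₂_functional_equation]
    simp
  · rw [thetaFour, thetaTwo_eq, jacobiTheta₂_functional_equation,
      ← jacobiTheta₂_neg_left (-1 / σ / 2), mul_assoc]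
    congr 2
    · congr 1
      field_simp
      ring
    · congr 1
      field_simp
  · have hexp : cexp (π * I * σ / 4) * cexp (-π * I * (σ / 2) ^ 2 / σ) = 1 := by
      rw [← Complex.exp_add, ← Complex.exp_zero]
      congr 1
      field_simp
      ring
    rw [thetaFour, thetaTwo_eq, jacobiTheta₂_functional_equation, div_div_cancel_left' hσ,
      ← one_div]
    linear_combination
      (1 / (-I * σ) ^ (1 / 2 : ℂ) * jacobiTheta₂ (1 / 2) (-1 / σ)) * hexp

lemma exp_pi_mul_I_div_four_sq : cexp (π * I / 4) ^ 2 = I := by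
  have h : ((2 : ℕ) : ℂ) * (π * I / 4) = π / 2 * I := by
    push_cast
    ring
  rw [← Complex.exp_nat_mul, h, exp_pi_div_two_mul_I]

lemma exp_pi_mul_I_div_four_mul_one_sub_I : cexp (π * I / 4) * (1 - I) = (√2 : ℝ) := by
  have h : cexp (π * I / 4) = ((√2 / 2 : ℝ) : ℂ) + ((√2 / 2 : ℝ) : ℂ) * I := by
    rw [show (π * I / 4 : ℂ) = ((π / 4 : ℝ) : ℂ) * I by push_cast; ring, Complex.exp_mul_I,
      ← ofReal_cos, ← ofReal_sin, Real.cos_pi_div_four, Real.sin_pi_div_four]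
  rw [h]
  push_cast
  linear_combination (-((√2 : ℝ) : ℂ) / 2) * I_sq

variable {σ : ℂ}

lemma thetaTwo_two_mul_sq (σ : ℂ) : thetaTwo (2 * σ) ^ 2 = -I * thetaTwo (2 * σ + 1) ^ 2 := by
  rw [thetaTwo_add_one, mul_pow, exp_pi_mul_I_div_four_sq]
  linear_combination thetaTwo (2 * σ) ^ 2 * I_sq

lemma thetaThree_sq_eq_two_mul_add_one (hσ : 0 < σ.im) :
    thetaThree σ ^ 2 = thetaFour (2 * σ + 1) ^ 2 - I * thetaTwo (2 * σ + 1) ^ 2 := by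
  rw [thetaThree_sq hσ, thetaTwo_two_mul_sq, thetaFour_add_one]
  ring

lemma thetaFour_sq_eq_two_mul_add_one (hσ : 0 < σ.im) :
    thetaFour σ ^ 2 = thetaFour (2 * σ + 1) ^ 2 + I * thetaTwo (2 * σ + 1) ^ 2 := by
  rw [thetaFour_sq hσ, thetaTwo_two_mul_sq, thetaFour_add_one]
  ring

lemma thetaThree_mul_thetaFour_eq_two_mul_add_one (hσ : 0 < σ.im) :
    thetaThree σ * thetaFour σ = thetaThree (2 * σ + 1) ^ 2 := by
  rw [thetaThree_mul_thetaFour hσ, thetaThree_add_one]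

lemma thetaTwo_sq_eq_two_mul_add_one (hσ : 0 < σ.im) :
    thetaTwo σ ^ 2 =
      -2 * I * cexp (π * I / 4) * (thetaTwo (2 * σ + 1) * thetaFour (2 * σ + 1)) := by
  rw [thetaTwo_sq hσ, thetaTwo_add_one, thetaFour_add_one]
  linear_combination (2 * thetaTwo (2 * σ) * thetaThree (2 * σ)) *
    (I_sq + I * exp_pi_mul_I_div_four_sq)

-- For such `σ` the transformations `σ ↦ -1/σ ↦ 3·(-1/σ)` and `σ ↦ 2σ + 1` have images that differ
-- by an integer, so the degree-three relation links `σ` to `2σ + 1`.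
lemma thetaThree_mul_thetaFour_sub_of_quadratic (hσ : 0 < σ.im)
    (hquad : 2 * σ ^ 2 + 2 * σ + 3 = 0) :
    thetaThree σ * thetaFour (2 * σ + 1) -
      cexp (π * I / 4) * thetaFour σ * thetaTwo (2 * σ + 1) =
        thetaTwo σ * thetaThree (2 * σ + 1) := by
  have hσ0 : σ ≠ 0 := by
    rintro rfl
    simp at hσ
  have htriple : 3 * (-1 / σ) = 2 * σ + 1 + 1 := by
    field_simp
    linear_combination -hquad
  have him : 0 < (-1 / σ).im := by
    have h := congrArg Complex.im htriple
    simp only [mul_im, add_im, one_im, re_ofNat, im_ofNat] at h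
    linarith
  have hdeg := thetaThree_mul_thetaThree_three_eq_add him
  rw [htriple, thetaThree_add_one (2 * σ + 1), thetaFour_add_one (2 * σ + 1),
    thetaTwo_add_one (2 * σ + 1)] at hdeg
  obtain ⟨c, hthree, hfour, htwo⟩ := exists_thetaConstants_neg_inv hσ0
  rw [hthree, hfour, htwo]
  linear_combination c * hdeg

theorem thetaFour_pow_four_sub_thetaTwo_pow_four {τ : ℂ} (hτ : 0 < τ.im) (h5 : τ ^ 2 = -5) :
    thetaFour τ ^ 4 - thetaTwo τ ^ 4 =
      2 * (√2 : ℝ) * (thetaTwo τ * thetaFour τ * thetaThree τ ^ 2) := by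
  obtain ⟨σ, rfl⟩ : ∃ σ, τ = 2 * σ + 1 := ⟨(τ - 1) / 2, by ring⟩
  have hσ : 0 < σ.im := by simpa using hτ
  have hlin := thetaThree_mul_thetaFour_sub_of_quadratic hσ (by linear_combination h5 / 2)
  have hsq := congrArg (· ^ 2) hlin
  rw [← exp_pi_mul_I_div_four_mul_one_sub_I]
  linear_combination hsq -
    thetaFour (2 * σ + 1) ^ 2 * thetaThree_sq_eq_two_mul_add_one hσ -
    I * thetaTwo (2 * σ + 1) ^ 2 * thetaFour_sq_eq_two_mul_add_one hσ +
    2 * cexp (π * I / 4) * thetaTwo (2 * σ + 1) * thetaFour (2 * σ + 1) *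
      thetaThree_mul_thetaFour_eq_two_mul_add_one hσ +
    thetaThree (2 * σ + 1) ^ 2 * thetaTwo_sq_eq_two_mul_add_one hσ -
    thetaFour σ ^ 2 * thetaTwo (2 * σ + 1) ^ 2 * exp_pi_mul_I_div_four_sq -
    thetaTwo (2 * σ + 1) ^ 4 * I_sq

end Modular

/-! ### Elimination of the theta constants -/

section Elimination

variable {K : Type*} [Field K] [CharZero K]

lemma pow_four_add_pow_four_of_add_eq_one {R : Type*} [CommRing R] {x y : R} (h : x + y = 1) :
    x ^ 4 + y ^ 4 = 1 - 4 * (x * y) + 2 * (x * y) ^ 2 := by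
  obtain rfl := eq_sub_of_add_eq' h
  ring

lemma sq_pow_four_sub_pow_four_of_add_eq_one {R : Type*} [CommRing R] {x y : R} (h : x + y = 1) :
    (x ^ 4 - y ^ 4) ^ 2 = (1 - 4 * (x * y)) * (1 - 2 * (x * y)) ^ 2 := by
  obtain rfl := eq_sub_of_add_eq' h
  ring

-- `x = ac` and `y = bd` have sum `1` and satisfy `b⁴x⁴ + a⁴y⁴ = (ab)⁴`; squaring away the
-- antisymmetric part `(b⁴ - a⁴)(x⁴ - y⁴)` leaves a relation between `ab` and `xy = (ab)(cd)`.
lemma degree_three_modular_equation {a b c d : K} (hab : a * b ≠ 0) (h : a ^ 4 + b ^ 4 = 1)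
    (h' : c ^ 4 + d ^ 4 = 1) (hmix : a * c + b * d = 1) :
    ((a * b) ^ 2 + (c * d) ^ 2) ^ 2 =
      4 * (a * b) * (c * d) * (1 - 2 * (a * b) * (c * d)) ^ 2 := by
  have hdisc : (b ^ 4 - a ^ 4) ^ 2 = 1 - 4 * (a * b) ^ 4 := by
    linear_combination (a ^ 4 + b ^ 4 + 1) * h
  have hanti : (b ^ 4 - a ^ 4) * ((a * c) ^ 4 - (b * d) ^ 4) =
      2 * (a * b) ^ 4 - ((a * c) ^ 4 + (b * d) ^ 4) := by
    linear_combination 2 * (a * b) ^ 4 * h' - ((a * c) ^ 4 + (b * d) ^ 4) * h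
  have hsq := congrArg (· ^ 2) hanti
  simp only [mul_pow _ _ 2, hdisc, pow_four_add_pow_four_of_add_eq_one hmix,
    sq_pow_four_sub_pow_four_of_add_eq_one hmix] at hsq
  refine mul_left_cancel₀ (mul_ne_zero (by norm_num : (4 : K) ≠ 0) (pow_ne_zero 4 hab)) ?_
  linear_combination -hsq

lemma quartic_of_pow_four_sub_pow_four {R : Type*} [CommRing R] {a b s : R} (hs : s ^ 2 = 2)
    (h : a ^ 4 + b ^ 4 = 1) (hsub : b ^ 4 - a ^ 4 = 2 * s * (a * b)) :
    72 * (a * b) ^ 4 - 16 * (a * b) ^ 8 = 1 := by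
  have hsq := congrArg (· ^ 2) hsub
  have hbiquadratic : 4 * (a * b) ^ 4 + 8 * (a * b) ^ 2 = 1 := by
    linear_combination (a ^ 4 + b ^ 4 + 1) * h - hsq - 4 * (a * b) ^ 2 * hs
  linear_combination (-(4 * (a * b) ^ 4 - 8 * (a * b) ^ 2 - 1)) * hbiquadratic

lemma quadratic_mul_eq_zero_of_modular_equation {u v H : K} (hu : u ≠ 0)
    (hmod : (u ^ 2 + v ^ 2) ^ 2 = 4 * u * v * (1 - 2 * u * v) ^ 2)
    (hquartic : 72 * u ^ 4 - 16 * u ^ 8 = 1) (hH : H * u ^ 3 = 4 * v) :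
    (H ^ 2 - 64 * H + 64) * (u ^ 8 * H ^ 2 + 4) = 0 := by
  obtain rfl : v = H * u ^ 3 / 4 := by linear_combination -hH / 4
  refine (mul_eq_zero.1 ?_).resolve_left (pow_ne_zero 4 hu)
  linear_combination 256 * hmod - 4 * u ^ 4 * H ^ 2 * hquartic

-- If `u⁸H² = -4`, the quartic relation for `u` gives `(H² - 64)² = -20736 H²`.
lemma pow_eight_mul_sq_add_four_ne_zero {u : ℂ} (hquartic : 72 * u ^ 4 - 16 * u ^ 8 = 1) (H : ℝ) :
    u ^ 8 * (H : ℂ) ^ 2 + 4 ≠ 0 := by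
  intro h
  have hlin : 72 * u ^ 4 * (H : ℂ) ^ 2 = H ^ 2 - 64 := by
    linear_combination (H : ℂ) ^ 2 * hquartic + 16 * h
  have hreal : (H ^ 2 - 64) ^ 2 + 20736 * H ^ 2 = 0 := by
    have hsq := congrArg (· ^ 2) hlin
    exact_mod_cast (by linear_combination -hsq + 5184 * (H : ℂ) ^ 2 * h :
      ((H : ℂ) ^ 2 - 64) ^ 2 + 20736 * (H : ℂ) ^ 2 = 0)
  nlinarith [sq_nonneg (H ^ 2 - 64), sq_nonneg H]

lemma eq_eight_mul_four_sub_sqrt {H : ℝ} (h : H ^ 2 - 64 * H + 64 = 0) (hlt : H < 32) :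
    H = 8 * (4 - √15) := by
  have hsqrt : √15 ^ 2 = 15 := Real.sq_sqrt (by norm_num)
  have hfactor : (H - 8 * (4 - √15)) * (H - 8 * (4 + √15)) = 0 := by
    linear_combination h - 64 * hsqrt
  rcases mul_eq_zero.1 hfactor with hminus | hplus
  · exact sub_eq_zero.1 hminus
  · linarith [Real.sqrt_nonneg 15]

end Elimination

lemma nome_three_mul (τ : ℂ) : nome (3 * τ) = nome τ ^ 3 := by
  rw [nome, nome, ← Complex.exp_nat_mul]
  congr 1
  push_cast
  ring

lemma nome_I_mul_ofReal (t : ℝ) : nome (I * t) = (Real.exp (-π * t) : ℝ) := by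
  rw [nome, ofReal_exp]
  congr 1
  push_cast
  linear_combination π * t * I_sq

lemma oddProd_nome_ne_zero {τ : ℂ} (hτ : 0 < τ.im) : oddProd (nome τ) ≠ 0 := by
  intro h
  have := oddProd_pow_six_mul_thetaTwo_mul_thetaFour hτ
  simp [h, thetaThree_ne_zero hτ] at this

lemma oddProd_ratio_mul_thetaRatio_pow_three {τ : ℂ} (hτ : 0 < τ.im) :
    oddProd (nome τ) ^ 18 / oddProd (nome (3 * τ)) ^ 6 *
        (thetaTwo τ / thetaThree τ * (thetaFour τ / thetaThree τ)) ^ 3 =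
      4 * (thetaTwo (3 * τ) / thetaThree (3 * τ) * (thetaFour (3 * τ) / thetaThree (3 * τ))) := by
  have hcube := congrArg (· ^ 3) (oddProd_pow_six_mul_thetaTwo_mul_thetaFour hτ)
  have htriple := oddProd_pow_six_mul_thetaTwo_mul_thetaFour (three_mul_im_pos hτ)
  have hexp : cexp (π * I * (3 * τ) / 4) = cexp (π * I * τ / 4) ^ 3 := by
    rw [← Complex.exp_nat_mul]
    congr 1
    push_cast
    ring
  rw [hexp] at htriple
  have h3 := thetaThree_ne_zero hτ
  have h3' := thetaThree_ne_zero (three_mul_im_pos hτ)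
  have hprod := oddProd_nome_ne_zero (three_mul_im_pos hτ)
  field_simp
  linear_combination thetaThree (3 * τ) ^ 2 * hcube - 4 * thetaThree τ ^ 6 * htriple

theorem quadratic_of_oddProd_ratio {τ : ℂ} (hτ : 0 < τ.im) (h5 : τ ^ 2 = -5) {H : ℝ}
    (hH : (H : ℂ) = oddProd (nome τ) ^ 18 / oddProd (nome (3 * τ)) ^ 6) :
    H ^ 2 - 64 * H + 64 = 0 := by
  have h3 := thetaThree_ne_zero hτ
  have h3' := thetaThree_ne_zero (three_mul_im_pos hτ)
  have hu : thetaTwo τ / thetaThree τ * (thetaFour τ / thetaThree τ) ≠ 0 :=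
    mul_ne_zero (div_ne_zero (thetaTwo_ne_zero hτ) h3) (div_ne_zero (thetaFour_ne_zero hτ) h3)
  have jacobi {σ : ℂ} (hσ : 0 < σ.im) :
      (thetaTwo σ / thetaThree σ) ^ 4 + (thetaFour σ / thetaThree σ) ^ 4 = 1 := by
    rw [div_pow, div_pow, ← add_div, ← thetaThree_pow_four hσ,
      div_self (pow_ne_zero 4 (thetaThree_ne_zero hσ))]
  have hmix : thetaTwo τ / thetaThree τ * (thetaTwo (3 * τ) / thetaThree (3 * τ)) +
      thetaFour τ / thetaThree τ * (thetaFour (3 * τ) / thetaThree (3 * τ)) = 1 := by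
    field_simp
    linear_combination -thetaThree_mul_thetaThree_three_eq_add hτ
  have hcm : (thetaFour τ / thetaThree τ) ^ 4 - (thetaTwo τ / thetaThree τ) ^ 4 =
      2 * (√2 : ℝ) * (thetaTwo τ / thetaThree τ * (thetaFour τ / thetaThree τ)) := by
    field_simp
    linear_combination thetaFour_pow_four_sub_thetaTwo_pow_four hτ h5
  have hsqrt : ((√2 : ℝ) : ℂ) ^ 2 = 2 := by
    exact_mod_cast Real.sq_sqrt (by norm_num : (0 : ℝ) ≤ 2)
  have hu_quartic := quartic_of_pow_four_sub_pow_four hsqrt (jacobi hτ) hcm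
  have hprod := quadratic_mul_eq_zero_of_modular_equation hu
    (degree_three_modular_equation hu (jacobi hτ) (jacobi (three_mul_im_pos hτ)) hmix) hu_quartic
    (hH ▸ oddProd_ratio_mul_thetaRatio_pow_three hτ)
  exact_mod_cast
    (mul_eq_zero.1 hprod).resolve_right (pow_eight_mul_sq_add_four_ne_zero hu_quartic H)

/-! ### The lattice sum -/

lemma cot_ofReal_mul_I (t : ℝ) : Complex.cot (t * I) = -I * (Real.cosh t / Real.sinh t : ℝ) := by
  rw [Complex.cot, Complex.cos_mul_I, Complex.sin_mul_I, mul_comm (Complex.sinh _),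
    div_mul_eq_div_div_swap, Complex.div_I]
  push_cast
  ring

lemma ofReal_mul_I_mem_integerComplement {a : ℝ} (ha : a ≠ 0) :
    (a * I : ℂ) ∈ Complex.integerComplement := by
  rw [Complex.mem_integerComplement_iff]
  rintro ⟨n, hn⟩
  simpa [eq_comm, ha] using congrArg Complex.im hn

lemma cotTerm_ofReal_mul_I {a : ℝ} (ha : a ≠ 0) (n : ℕ) :
    cotTerm (a * I) n = -2 * a * I * (1 / ((n + 1) ^ 2 + a ^ 2) : ℝ) := by
  have hfactor : (a * I + (n + 1)) * (a * I - (n + 1)) = -((n + 1) ^ 2 + a ^ 2 : ℂ) := by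
    linear_combination (a : ℂ) ^ 2 * I_sq
  rw [cotTerm_identity (ofReal_mul_I_mem_integerComplement ha), hfactor]
  push_cast
  rw [div_neg]
  ring

lemma hasSum_nat_inv_sq_add_sq {a : ℝ} (ha : a ≠ 0) :
    HasSum (fun n : ℕ => 1 / (((n : ℝ) + 1) ^ 2 + a ^ 2))
      ((π * (Real.cosh (π * a) / Real.sinh (π * a)) / a - 1 / a ^ 2) / 2) := by
  have hmem := ofReal_mul_I_mem_integerComplement ha
  have hcot : HasSum (cotTerm (a * I)) (π * Complex.cot (π * (a * I)) - 1 / (a * I)) := by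
    rw [cot_series_rep' hmem]
    exact (summable_cotTerm hmem).hasSum
  have haC : (a : ℂ) ≠ 0 := ofReal_ne_zero.2 ha
  have hvalue : (((π * (Real.cosh (π * a) / Real.sinh (π * a)) / a - 1 / a ^ 2) / 2 : ℝ) : ℂ) =
      (-2 * a * I)⁻¹ * (π * Complex.cot (π * (a * I)) - 1 / (a * I)) := by
    rw [← mul_assoc, ← ofReal_mul, cot_ofReal_mul_I]
    push_cast
    field_simp
    rw [I_sq]
    ring
  rw [← Complex.hasSum_ofReal, hvalue]
  refine (hcot.mul_left _).congr_fun fun n => ?_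
  rw [cotTerm_ofReal_mul_I ha, inv_mul_cancel_left₀ (by simp [ha])]

lemma hasSum_int_inv_sq_add_sq {a : ℝ} (ha : a ≠ 0) :
    HasSum (fun m : ℤ => 1 / ((m : ℝ) ^ 2 + a ^ 2))
      (π * (Real.cosh (π * a) / Real.sinh (π * a)) / a) := by
  have h := hasSum_nat_inv_sq_add_sq ha
  convert HasSum.of_add_one_of_neg_add_one (f := fun m : ℤ => 1 / ((m : ℝ) ^ 2 + a ^ 2))
    (h.congr_fun fun n => ?_) (h.congr_fun fun n => ?_) using 1
  · simp only [Int.cast_zero]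
    ring
  · push_cast
    rfl
  · push_cast
    rw [neg_sq]

lemma hasSum_neg_one_zpow_mul {K : Type*} [NormedField K] {f : ℤ → K} {s e : K} (hf : HasSum f s)
    (heven : HasSum (fun m => f (2 * m)) e) :
    HasSum (fun m : ℤ => (-1 : K) ^ m * f m) (2 * e - s) := by
  have hdouble : Function.Injective fun m : ℤ => 2 * m := mul_right_injective₀ two_ne_zero
  have hindicator : HasSum (fun m : ℤ => if Even m then f m else 0) e := by
    refine (hdouble.hasSum_iff fun m hm => if_neg fun h => hm ?_).1 (heven.congr_fun fun m => ?_)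
    · obtain ⟨k, rfl⟩ := h.two_dvd
      exact ⟨k, rfl⟩
    · exact if_pos (even_two_mul m)
  refine ((hindicator.mul_left 2).sub hf).congr_fun fun m => ?_
  rcases m.even_or_odd with hm | hm
  · rw [hm.neg_one_zpow, if_pos hm]
    ring
  · rw [hm.neg_one_zpow, if_neg (Int.not_even_iff_odd.2 hm)]
    ring

lemma cosh_div_sinh_half_sub_cosh_div_sinh {x : ℝ} (hx : x ≠ 0) :
    Real.cosh (x / 2) / Real.sinh (x / 2) - Real.cosh x / Real.sinh x = 1 / Real.sinh x := by
  obtain ⟨y, rfl⟩ : ∃ y, x = 2 * y := ⟨x / 2, by ring⟩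
  have hsinh : Real.sinh y ≠ 0 := by simpa using hx
  have hcosh := (Real.cosh_pos y).ne'
  rw [mul_div_cancel_left₀ y two_ne_zero, Real.sinh_two_mul, Real.cosh_two_mul]
  field_simp
  linear_combination Real.cosh_sq y

theorem hasSum_int_neg_one_zpow_div_sq_add_sq {a : ℝ} (ha : a ≠ 0) :
    HasSum (fun m : ℤ => (-1 : ℝ) ^ m / ((m : ℝ) ^ 2 + a ^ 2)) (π / (a * Real.sinh (π * a))) := by
  have heven : HasSum (fun m : ℤ => 1 / (((2 * m : ℤ) : ℝ) ^ 2 + a ^ 2))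
      (1 / 4 * (π * (Real.cosh (π * a / 2) / Real.sinh (π * a / 2)) / (a / 2))) := by
    rw [mul_div_assoc π a]
    refine ((hasSum_int_inv_sq_add_sq
      (div_ne_zero ha two_ne_zero)).mul_left _).congr_fun fun m => ?_
    rw [one_div_mul_one_div]
    push_cast
    ring
  have hvalue : π / (a * Real.sinh (π * a)) =
      2 * (1 / 4 * (π * (Real.cosh (π * a / 2) / Real.sinh (π * a / 2)) / (a / 2))) -
        π * (Real.cosh (π * a) / Real.sinh (π * a)) / a := by
    linear_combination
      -π / a * cosh_div_sinh_half_sub_cosh_div_sinh (mul_ne_zero Real.pi_ne_zero ha)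
  rw [hvalue]
  exact (hasSum_neg_one_zpow_mul (hasSum_int_inv_sq_add_sq ha) heven).congr_fun fun m =>
    div_eq_mul_one_div _ _

lemma hasSum_odd_pow_inv_sinh {s : ℝ} (hs : 0 < s) :
    HasSum (fun l : ℕ => Real.exp (-s) ^ (2 * l + 1)) (1 / (2 * Real.sinh s)) := by
  have hlt : Real.exp (-s) ^ 2 < 1 :=
    pow_lt_one₀ (Real.exp_pos _).le (Real.exp_lt_one_iff.2 (neg_neg_of_pos hs)) two_ne_zero
  have hden := (sub_pos.2 hlt).ne'
  have hvalue : 1 / (2 * Real.sinh s) = Real.exp (-s) * (1 - Real.exp (-s) ^ 2)⁻¹ := by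
    have hinv : Real.exp s = (Real.exp (-s))⁻¹ := by rw [Real.exp_neg, inv_inv]
    rw [Real.sinh_eq, hinv]
    field_simp
  rw [hvalue]
  refine ((hasSum_geometric_of_lt_one (by positivity) hlt).mul_left _).congr_fun fun l => ?_
  ring

lemma hasSum_comp_natAbs_three_mul_add_one {G : Type*} [AddCommGroup G] [TopologicalSpace G]
    [IsTopologicalAddGroup G] {f : ℕ → G} {s t : G} (hf : HasSum f s)
    (hthree : HasSum (fun k => f (3 * k)) t) :
    HasSum (fun n : ℤ => f (3 * n + 1).natAbs) (s - t) := by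
  have htriple : Function.Injective fun k : ℕ => 3 * k := mul_right_injective₀ three_ne_zero
  have hinj : Function.Injective fun n : ℤ => (3 * n + 1).natAbs := fun m n h => by
    dsimp only at h
    omega
  have hindicator : HasSum (fun k => if 3 ∣ k then f k else 0) t := by
    refine (htriple.hasSum_iff fun k hk => if_neg fun h => hk ?_).1 (hthree.congr_fun fun k => ?_)
    · obtain ⟨j, rfl⟩ := h
      exact ⟨j, rfl⟩
    · exact if_pos (dvd_mul_right 3 k)
  refine ((hinj.hasSum_iff fun k hk => ?_).2 (hf.sub hindicator)).congr_fun fun n => ?_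
  · rw [if_pos, sub_self]
    by_contra hdvd
    refine hk ?_
    rcases (by omega : k % 3 = 1 ∨ k % 3 = 2) with h | h
    · exact ⟨k / 3, by dsimp only; omega⟩
    · exact ⟨-(k / 3 : ℕ) - 1, by dsimp only; omega⟩
  · simp only [Function.comp_apply]
    rw [if_neg (by omega), sub_zero]

lemma hasSum_taylorSeries_log_one_add {r : ℝ} (hr : |r| < 1) :
    HasSum (fun k : ℕ => (-1) ^ (k + 1) * r ^ k / k) (Real.log (1 + r)) := by
  have h := Complex.hasSum_taylorSeries_log (z := r) (by simpa using hr)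
  rw [← Complex.hasSum_ofReal, Complex.ofReal_log (by linarith [neg_abs_le r])]
  exact_mod_cast h

/-- The `n`-th term of the series for `log (1 + r) - log (1 + r ^ 3) / 3`, that is, of the Taylor
series of `log (1 + r)` without the multiples of `3`; the exponent `k` of the Taylor series is
encoded by the integer `n` with `k = |3n + 1|`. -/
noncomputable def logTerm (r : ℝ) (n : ℤ) : ℝ :=
  (-1) ^ n * r ^ (3 * n + 1).natAbs / (3 * n + 1).natAbs

lemma neg_one_pow_natAbs_three_mul_add_one (n : ℤ) :
    (-1 : ℝ) ^ ((3 * n + 1).natAbs + 1) = (-1) ^ n := by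
  rcases n.even_or_odd with hn | hn
  · rw [hn.neg_one_zpow, Even.neg_one_pow]
    grind
  · rw [hn.neg_one_zpow, Odd.neg_one_pow]
    grind

lemma hasSum_logTerm {r : ℝ} (hr : |r| < 1) :
    HasSum (logTerm r) (Real.log (1 + r) - 1 / 3 * Real.log (1 + r ^ 3)) := by
  have hr3 : |r ^ 3| < 1 := by
    rw [abs_pow]
    exact pow_lt_one₀ (abs_nonneg r) hr three_ne_zero
  have hthree := ((hasSum_taylorSeries_log_one_add hr3).mul_left (1 / 3)).congr_fun
    (g := fun k : ℕ => (-1) ^ (3 * k + 1) * r ^ (3 * k) / ((3 * k : ℕ) : ℝ)) fun k => by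
      rw [pow_succ, pow_mul, pow_mul]
      push_cast
      norm_num
      ring
  refine (hasSum_comp_natAbs_three_mul_add_one (hasSum_taylorSeries_log_one_add hr)
    hthree).congr_fun fun n => ?_
  rw [logTerm, neg_one_pow_natAbs_three_mul_add_one]

section RealOddProd

variable {q : ℝ}

lemma summable_log_one_add_odd_pow (hq : ‖q‖ < 1) :
    Summable fun k : ℕ => Real.log (1 + q ^ (2 * k + 1)) := by
  have hpow : Summable fun k : ℕ => q ^ (2 * k + 1) := (summable_norm_odd_pow hq).of_norm
  exact Real.summable_log_one_add_of_summable hpow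

lemma oddProd_eq_exp_tsum_log (h0 : 0 ≤ q) (h1 : q < 1) :
    oddProd q = Real.exp (∑' k : ℕ, Real.log (1 + q ^ (2 * k + 1))) :=
  (Real.rexp_tsum_eq_tprod (fun k => by positivity)
    (summable_log_one_add_odd_pow (by rwa [Real.norm_of_nonneg h0]))).symm

lemma oddProd_pos (h0 : 0 ≤ q) (h1 : q < 1) : 0 < oddProd q := by
  rw [oddProd_eq_exp_tsum_log h0 h1]
  exact Real.exp_pos _

lemma hasSum_log_one_add_odd_pow (h0 : 0 ≤ q) (h1 : q < 1) :
    HasSum (fun k : ℕ => Real.log (1 + q ^ (2 * k + 1))) (Real.log (oddProd q)) := by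
  rw [oddProd_eq_exp_tsum_log h0 h1, Real.log_exp]
  exact (summable_log_one_add_odd_pow (by rwa [Real.norm_of_nonneg h0])).hasSum

lemma log_oddProd_nonneg (h0 : 0 ≤ q) (h1 : q < 1) : 0 ≤ Real.log (oddProd q) :=
  (hasSum_log_one_add_odd_pow h0 h1).nonneg fun k =>
    Real.log_nonneg (le_add_of_nonneg_right (pow_nonneg h0 (2 * k + 1)))

lemma log_oddProd_le (h0 : 0 ≤ q) (h1 : q < 1) : Real.log (oddProd q) ≤ q / (1 - q ^ 2) := by
  have hgeom := (hasSum_geometric_of_lt_one (sq_nonneg q)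
    (pow_lt_one₀ h0 h1 two_ne_zero)).mul_left q
  rw [← div_eq_mul_inv] at hgeom
  refine hasSum_le (fun k => ?_) (hasSum_log_one_add_odd_pow h0 h1) hgeom
  calc Real.log (1 + q ^ (2 * k + 1)) ≤ q ^ (2 * k + 1) := by
        linarith [Real.log_le_sub_one_of_pos (by positivity : 0 < 1 + q ^ (2 * k + 1))]
    _ = q * (q ^ 2) ^ k := by ring

lemma summable_logTerm_odd_pow (h0 : 0 ≤ q) (h1 : q < 1) :
    Summable fun p : ℤ × ℕ => logTerm (q ^ (2 * p.2 + 1)) p.1 := by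
  have hterm := (hasSum_logTerm (r := q) (by rwa [abs_of_nonneg h0])).summable.norm
  have hgeom := summable_geometric_of_lt_one (sq_nonneg q) (pow_lt_one₀ h0 h1 two_ne_zero)
  refine .of_norm_bounded
    (hterm.mul_of_nonneg hgeom (fun _ => norm_nonneg _) fun _ => by positivity) ?_
  rintro ⟨n, l⟩
  simp only [logTerm, norm_div, norm_mul, norm_pow, Real.norm_of_nonneg h0]
  rw [div_mul_eq_mul_div, mul_assoc]
  gcongr
  rw [← pow_mul, ← pow_mul, ← pow_add]
  refine pow_le_pow_of_le_one h0 h1.le ?_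
  nlinarith [show 1 ≤ (3 * n + 1).natAbs by omega]

theorem hasSum_tsum_logTerm_odd_pow (h0 : 0 ≤ q) (h1 : q < 1) :
    HasSum (fun n : ℤ => ∑' l : ℕ, logTerm (q ^ (2 * l + 1)) n)
      (Real.log (oddProd q) - 1 / 3 * Real.log (oddProd (q ^ 3))) := by
  have hsum := summable_logTerm_odd_pow h0 h1
  have hcol (l : ℕ) := hasSum_logTerm (r := q ^ (2 * l + 1)) (by
    rw [abs_of_nonneg (by positivity)]
    exact pow_lt_one₀ h0 h1 (by omega))
  have htotal := ((Equiv.prodComm ℕ ℤ).hasSum_iff.2 hsum.hasSum).prod_fiberwise hcol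
  have hlog := (hasSum_log_one_add_odd_pow h0 h1).sub
    ((hasSum_log_one_add_odd_pow (pow_nonneg h0 3) (pow_lt_one₀ h0 h1 three_ne_zero)).mul_left
      (1 / 3))
  rw [← htotal.unique (hlog.congr_fun fun l => by rw [pow_right_comm])]
  exact hsum.hasSum.prod_fiberwise fun n => (hsum.prod_factor n).hasSum

end RealOddProd

lemma tsum_logTerm_odd_pow {c : ℝ} (hc : 0 < c) (n : ℤ) :
    ∑' l : ℕ, logTerm (Real.exp (-π * c) ^ (2 * l + 1)) n =
      (-1) ^ n / (2 * (3 * n + 1).natAbs * Real.sinh (π * (c * (3 * n + 1).natAbs))) := by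
  have hpos : (0 : ℝ) < (3 * n + 1).natAbs := by
    exact_mod_cast (by omega : 0 < (3 * n + 1).natAbs)
  have hexp : Real.exp (-(π * (c * (3 * n + 1).natAbs))) =
      Real.exp (-π * c) ^ (3 * n + 1).natAbs := by
    rw [← Real.exp_nat_mul]
    congr 1
    ring
  have h := (hasSum_odd_pow_inv_sinh (by positivity : 0 < π * (c * (3 * n + 1).natAbs))).mul_left
    ((-1) ^ n / ((3 * n + 1).natAbs : ℝ))
  rw [hexp] at h
  rw [(h.congr_fun fun l => ?_).tsum_eq]
  · ring
  · rw [logTerm, pow_right_comm]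
    ring

lemma tsum_neg_one_zpow_div_eq {c : ℝ} (hc : 0 < c) (n : ℤ) :
    ∑' m : ℤ, (-1 : ℝ) ^ (m + n) / ((m : ℝ) ^ 2 + c ^ 2 * (3 * n + 1) ^ 2) =
      2 * π / c * ∑' l : ℕ, logTerm (Real.exp (-π * c) ^ (2 * l + 1)) n := by
  have hpos : (0 : ℝ) < (3 * n + 1).natAbs := by
    exact_mod_cast (by omega : 0 < (3 * n + 1).natAbs)
  have hsq : ((3 * n + 1).natAbs : ℝ) ^ 2 = (3 * n + 1) ^ 2 := by
    rw [Nat.cast_natAbs, Int.cast_abs, sq_abs]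
    push_cast
    rfl
  have h := (hasSum_int_neg_one_zpow_div_sq_add_sq (mul_pos hc hpos).ne').mul_left ((-1 : ℝ) ^ n)
  rw [tsum_logTerm_odd_pow hc, (h.congr_fun fun m => ?_).tsum_eq]
  · field_simp
  · rw [zpow_add₀ (by norm_num), mul_pow, hsq]
    ring

theorem hasSum_lattice {c : ℝ} (hc : 0 < c) :
    HasSum (fun n : ℤ => ∑' m : ℤ,
        (-1 : ℝ) ^ (m + n) / ((m : ℝ) ^ 2 + c ^ 2 * (3 * (n : ℝ) + 1) ^ 2))
      (2 * π / c * (Real.log (oddProd (Real.exp (-π * c))) -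
        1 / 3 * Real.log (oddProd (Real.exp (-π * c) ^ 3)))) := by
  have hlt : Real.exp (-π * c) < 1 := by
    rw [Real.exp_lt_one_iff]
    nlinarith [Real.pi_pos]
  exact ((hasSum_tsum_logTerm_odd_pow (Real.exp_pos _).le hlt).mul_left (2 * π / c)).congr_fun
    (tsum_neg_one_zpow_div_eq hc)

/-! ### The evaluation at `τ = i√5` -/

lemma exp_neg_pi_mul_sqrt_five_lt : Real.exp (-π * √5) < 1 / 64 := by
  have hsqrt : 2 < √5 := Real.lt_sqrt_of_sq_lt (by norm_num)
  have hexp : (64 : ℝ) < Real.exp 6 := by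
    calc (64 : ℝ) = 2 ^ 6 := by norm_num
      _ < Real.exp 1 ^ 6 := by gcongr; linarith [Real.exp_one_gt_d9]
      _ = Real.exp 6 := by rw [← Real.exp_nat_mul]; norm_num
  calc Real.exp (-π * √5) ≤ Real.exp (-6) := Real.exp_le_exp.2 (by nlinarith [Real.pi_gt_three])
    _ = 1 / Real.exp 6 := by rw [Real.exp_neg, one_div]
    _ < 1 / 64 := one_div_lt_one_div_of_lt (by norm_num) hexp

lemma log_oddProd_pow_div {q : ℝ} (h0 : 0 ≤ q) (h1 : q < 1) :
    Real.log (oddProd q ^ 18 / oddProd (q ^ 3) ^ 6) =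
      18 * Real.log (oddProd q) - 6 * Real.log (oddProd (q ^ 3)) := by
  have hpos := oddProd_pos h0 h1
  have hpos3 := oddProd_pos (pow_nonneg h0 3) (pow_lt_one₀ h0 h1 three_ne_zero)
  rw [Real.log_div (by positivity) (by positivity), Real.log_pow, Real.log_pow]
  norm_num

lemma oddProd_pow_div_lt {q : ℝ} (h0 : 0 ≤ q) (hq : q < 1 / 64) :
    oddProd q ^ 18 / oddProd (q ^ 3) ^ 6 < 32 := by
  have h1 : q < 1 := by linarith
  have hq3 : q ^ 3 < 1 := pow_lt_one₀ h0 h1 three_ne_zero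
  have hpos := oddProd_pos h0 h1
  have hpos3 := oddProd_pos (pow_nonneg h0 3) hq3
  have hratio : q / (1 - q ^ 2) < 1 / 18 := by
    rw [div_lt_iff₀ (by nlinarith)]
    nlinarith
  have hlog : Real.log (oddProd q ^ 18 / oddProd (q ^ 3) ^ 6) < 1 := by
    rw [log_oddProd_pow_div h0 h1]
    linarith [log_oddProd_le h0 h1, log_oddProd_nonneg (pow_nonneg h0 3) hq3]
  calc oddProd q ^ 18 / oddProd (q ^ 3) ^ 6
      < Real.exp 1 := (Real.log_lt_iff_lt_exp (by positivity)).1 hlog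
    _ < 32 := by linarith [Real.exp_one_lt_d9]

theorem oddProd_exp_neg_pi_mul_sqrt_five :
    oddProd (Real.exp (-π * √5)) ^ 18 / oddProd (Real.exp (-π * √5) ^ 3) ^ 6 = 8 * (4 - √15) := by
  have hlt := exp_neg_pi_mul_sqrt_five_lt
  have hnorm : ‖Real.exp (-π * √5)‖ < 1 := by
    rw [Real.norm_of_nonneg (Real.exp_pos _).le]
    linarith
  have hnorm3 : ‖Real.exp (-π * √5) ^ 3‖ < 1 := by
    rw [norm_pow]
    exact pow_lt_one₀ (norm_nonneg _) hnorm three_ne_zero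
  have him : 0 < (I * (√5 : ℝ)).im := by simp
  have hsq : (I * (√5 : ℝ)) ^ 2 = -5 := by
    rw [mul_pow, I_sq, ← ofReal_pow, Real.sq_sqrt (by norm_num)]
    norm_num
  refine eq_eight_mul_four_sub_sqrt (quadratic_of_oddProd_ratio him hsq ?_)
    (oddProd_pow_div_lt (Real.exp_pos _).le hlt)
  rw [nome_three_mul, nome_I_mul_ofReal, ← ofReal_pow, ← ofReal_oddProd hnorm,
    ← ofReal_oddProd hnorm3]
  push_cast
  rfl

theorem F31_at_inv_sqrt_five_general :
    HasSum (fun n : ℤ => ∑' m : ℤ, (-1 : ℝ) ^ (m + n) / ((m : ℝ) ^ 2 + 5 * (3 * (n : ℝ) + 1) ^ 2))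
      (π / (9 * √5) * Real.log (8 * (4 - √15))) := by
  have hlattice := hasSum_lattice (Real.sqrt_pos.2 (by norm_num : (0 : ℝ) < 5))
  rw [Real.sq_sqrt (by norm_num)] at hlattice
  have hlog := log_oddProd_pow_div (Real.exp_pos (-π * √5)).le
    (exp_neg_pi_mul_sqrt_five_lt.trans (by norm_num))
  rw [oddProd_exp_neg_pi_mul_sqrt_five] at hlog
  have hvalue : π / (9 * √5) * Real.log (8 * (4 - √15)) =
      2 * π / √5 * (Real.log (oddProd (Real.exp (-π * √5))) -
        1 / 3 * Real.log (oddProd (Real.exp (-π * √5) ^ 3))) := by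
    rw [hlog]
    ring
  rwa [hvalue]

end ThetaEvaluation

/-- `∑∑ (-1)^{m+n}/(m² + 5(3n+1)²) = (π/(9√5)) log(8(4 - √15))`. -/
theorem F31_at_inv_sqrt_five :
    Tendsto (fun N : ℕ => ∑ n ∈ Finset.Ioo (-(N : ℤ)) (N : ℤ),
        ∑' m : ℤ, (-1 : ℝ) ^ (m + n) / ((m : ℝ) ^ 2 + 5 * (3 * (n : ℝ) + 1) ^ 2))
      atTop
      (nhds (Real.pi / (9 * Real.sqrt 5) * Real.log (8 * (4 - Real.sqrt 15)))) := by
  have hsum := F31_at_inv_sqrt_five_general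
  rw [HasSum, SummationFilter.unconditional_filter] at hsum
  exact hsum.comp Finset.tendsto_Ioo_neg
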